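/- The magnetic Wigner transform, defined for K ∈ S(ℝ^d×ℝ^d, B(H,H')) by (W^A K)(x,ξ) := ∫_{ℝ^d} e^{−iy·ξ} e^{−i(λ/ε)Γ_A(x−(ε/2)y, x+(ε/2)y)} K(x/ε + y/2, x/ε − y/2) dy, is a topological vector space isomorphism S(ℝ^d×ℝ^d, B(H,H')) → S(ℝ^d×ℝ^d, B(H,H')), and it is the two-sided inverse of the magnetic kernel map f ↦ K^A_f, where K^A_f(x,y) := e^{−i(λ/ε)Γ_A(εx,εy)} (2π)^{−d} ∫_{ℝ^d} e^{−i(y−x)·η} f((ε/2)(x+y), η) dη. -/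

import Mathlib

open MeasureTheory Complex SchwartzMap
open scoped Real ENNReal NNReal

set_option maxHeartbeats 1000000
set_option synthInstance.maxHeartbeats 1000000

noncomputable section

local notation "⟪" x ", " y "⟫_ℝ" => @inner ℝ _ _ x y
local notation "⟪" x ", " y "⟫_ℂ" => @inner ℂ _ _ x y

/-- Euclidean configuration space. -/
abbrev Ed (d : ℕ) : Type := EuclideanSpace ℝ (Fin d)

/-- Line integral of the vector potential `A` along the segment `[x, y]`. -/
def lineInt {d : ℕ} (A : Ed d → Ed d) (x y : Ed d) : ℝ :=
  ∫ s in (0:ℝ)..(1:ℝ), ⟪A (x + s • (y - x)), y - x⟫_ℝ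

/-- The phase `e^{-i(y-x)·η} e^{-i(λ/ε)Γ_A(εx,εy)}` of the magnetic Weyl quantization. -/
def wPhase {d : ℕ} (ε lam : ℝ) (A : Ed d → Ed d) (x y η : Ed d) : ℂ :=
  Complex.exp (-Complex.I * ((⟪y - x, η⟫_ℝ : ℝ) : ℂ)) *
    Complex.exp (-Complex.I * (((lam / ε) * lineInt A (ε • x) (ε • y) : ℝ) : ℂ))

/-- Magnetic Weyl quantization of an operator-valued symbol (absolutely convergent version,
with the momentum integral innermost, suitable for Schwartz-class symbols). -/
def opA {d : ℕ} {H H' : Type*} [NormedAddCommGroup H] [NormedSpace ℂ H]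
    [NormedAddCommGroup H'] [NormedSpace ℂ H']
    (ε lam : ℝ) (A : Ed d → Ed d) (f : Ed d × Ed d → (H →L[ℂ] H')) (Ψ : Ed d → H) :
    Ed d → H' :=
  fun x => (((2 * Real.pi) ^ d)⁻¹ : ℝ) •
    ∫ y : Ed d, ∫ η : Ed d, wPhase ε lam A x y η • f ((ε / 2) • (x + y), η) (Ψ y)

/-- Magnetic Weyl quantization as an (iterated, oscillatory) integral with the momentum
integral outermost; this realizes the oscillatory integral for Hörmander-class symbols. -/
def opW {d : ℕ} {H H' : Type*} [NormedAddCommGroup H] [NormedSpace ℂ H]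
    [NormedAddCommGroup H'] [NormedSpace ℂ H']
    (ε lam : ℝ) (A : Ed d → Ed d) (f : Ed d × Ed d → (H →L[ℂ] H')) (Ψ : Ed d → H) :
    Ed d → H' :=
  fun x => (((2 * Real.pi) ^ d)⁻¹ : ℝ) •
    ∫ η : Ed d, ∫ y : Ed d, wPhase ε lam A x y η • f ((ε / 2) • (x + y), η) (Ψ y)

/-- Directional derivative of a phase-space function. -/
def dirD {d : ℕ} {F : Type*} [NormedAddCommGroup F] [NormedSpace ℝ F]
    (v : Ed d × Ed d) (g : Ed d × Ed d → F) : Ed d × Ed d → F :=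
  fun p => fderiv ℝ g p v

/-- Directions corresponding to the multi-indices `a` (position) and `α` (momentum). -/
def mkDirs {d : ℕ} (a α : List (Fin d)) : List (Ed d × Ed d) :=
  (a.map fun j => ((EuclideanSpace.single j (1:ℝ) : Ed d), (0 : Ed d))) ++
    α.map fun j => ((0 : Ed d), (EuclideanSpace.single j (1:ℝ) : Ed d))

/-- The iterated partial derivative `∂_x^a ∂_ξ^α f`. -/
def mDeriv {d : ℕ} {F : Type*} [NormedAddCommGroup F] [NormedSpace ℝ F]
    (a α : List (Fin d)) (f : Ed d × Ed d → F) : Ed d × Ed d → F :=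
  (mkDirs a α).foldr dirD f

/-- The Japanese bracket `⟨ξ⟩ = (1+|ξ|²)^{1/2}`. -/
def jb {d : ℕ} (ξ : Ed d) : ℝ := Real.sqrt (1 + ‖ξ‖ ^ 2)

/-- Operator-valued Hörmander class `S^m_{ρ,δ}(B(H,H'))`. -/
structure IsHormander {d : ℕ} {H H' : Type*} [NormedAddCommGroup H] [NormedSpace ℂ H]
    [NormedAddCommGroup H'] [NormedSpace ℂ H'] (m ρ δ : ℝ)
    (f : Ed d × Ed d → (H →L[ℂ] H')) : Prop where
  smooth : ContDiff ℝ (⊤ : ℕ∞) f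
  bound : ∀ a α : List (Fin d), ∃ C : ℝ, ∀ p : Ed d × Ed d,
    ‖mDeriv a α f p‖ ≤ C * jb p.2 ^ (m - ρ * (α.length : ℝ) + δ * (a.length : ℝ))

/-- `A` is smooth with polynomially bounded derivatives of all orders. -/
def IsPolyVF {d : ℕ} (A : Ed d → Ed d) : Prop :=
  ContDiff ℝ (⊤ : ℕ∞) A ∧ ∀ n : ℕ, ∃ C : ℝ, ∃ k : ℕ, ∀ x, ‖iteratedFDeriv ℝ n A x‖ ≤ C * (1 + ‖x‖) ^ k

/-- Components `B_{jl} = ∂_j A_l − ∂_l A_j` of the magnetic field `B = dA`. -/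
def Bcomp {d : ℕ} (A : Ed d → Ed d) (x : Ed d) (j l : Fin d) : ℝ :=
  fderiv ℝ (fun z => A z l) x (EuclideanSpace.single j (1:ℝ)) -
    fderiv ℝ (fun z => A z j) x (EuclideanSpace.single l (1:ℝ))

/-- The magnetic field `B = dA` is bounded with bounded derivatives of all orders. -/
def IsBoundedField {d : ℕ} (A : Ed d → Ed d) : Prop :=
  ∀ (j l : Fin d) (n : ℕ), ∃ C : ℝ, ∀ x, ‖iteratedFDeriv ℝ n (fun z => Bcomp A z j l) x‖ ≤ C


/-- The magnetic kernel map `f ↦ K^A_f`. -/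
def magKernel {d : ℕ} {H H' : Type*} [NormedAddCommGroup H] [NormedSpace ℂ H]
    [NormedAddCommGroup H'] [NormedSpace ℂ H']
    (ε lam : ℝ) (A : Ed d → Ed d) (f : Ed d × Ed d → (H →L[ℂ] H')) :
    Ed d × Ed d → (H →L[ℂ] H') :=
  fun q =>
    Complex.exp (-Complex.I * (((lam / ε) * lineInt A (ε • q.1) (ε • q.2) : ℝ) : ℂ)) •
      ((((2 * Real.pi) ^ d)⁻¹ : ℝ) •
        ∫ η : Ed d,
          Complex.exp (-Complex.I * ((⟪q.2 - q.1, η⟫_ℝ : ℝ) : ℂ)) •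
            f ((ε / 2) • (q.1 + q.2), η))

/-- The magnetic Wigner transform of an operator-valued kernel. -/
def wignerT {d : ℕ} {H H' : Type*} [NormedAddCommGroup H] [NormedSpace ℂ H]
    [NormedAddCommGroup H'] [NormedSpace ℂ H']
    (ε lam : ℝ) (A : Ed d → Ed d) (K : Ed d × Ed d → (H →L[ℂ] H')) :
    Ed d × Ed d → (H →L[ℂ] H') :=
  fun p =>
    ∫ y : Ed d,
      (Complex.exp (-Complex.I * ((⟪y, p.2⟫_ℝ : ℝ) : ℂ)) *
        Complex.exp (-Complex.I *
          (((lam / ε) * lineInt A (p.1 - (ε / 2) • y) (p.1 + (ε / 2) • y) : ℝ) : ℂ))) •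
        K (ε⁻¹ • p.1 + (2:ℝ)⁻¹ • y, ε⁻¹ • p.1 - (2:ℝ)⁻¹ • y)

section Helpers
set_option linter.unusedSectionVars false
open scoped FourierTransform

lemma htg_fderiv {D V : Type*} [NormedAddCommGroup D] [NormedSpace ℝ D]
    [NormedAddCommGroup V] [NormedSpace ℝ V] {g : D → V} (hg : g.HasTemperateGrowth) :
    (fderiv ℝ g).HasTemperateGrowth := by
  refine ⟨hg.1.fderiv_right (m := (⊤ : ℕ∞)) (by simp), fun n => ?_⟩
  obtain ⟨k, C, h⟩ := hg.2 (n + 1)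
  exact ⟨k, C, fun x => by rw [norm_iteratedFDeriv_fderiv]; exact h x⟩

/-- parametric integral over `[0,1]` -/
def parInt {D V : Type} [NormedAddCommGroup V] [NormedSpace ℝ V] (g : ℝ × D → V) (p : D) : V :=
  ∫ s in (0:ℝ)..1, g (s, p)

/-- derivative in the parameter -/
def parD {D V : Type} [NormedAddCommGroup D] [NormedSpace ℝ D]
    [NormedAddCommGroup V] [NormedSpace ℝ V] (g : ℝ × D → V) (q : ℝ × D) : D →L[ℝ] V :=
  (fderiv ℝ g q).comp (ContinuousLinearMap.inr ℝ ℝ D)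

lemma parD_htg {D V : Type} [NormedAddCommGroup D] [NormedSpace ℝ D]
    [NormedAddCommGroup V] [NormedSpace ℝ V] {g : ℝ × D → V} (hg : g.HasTemperateGrowth) :
    (parD g).HasTemperateGrowth :=
  (((ContinuousLinearMap.compL ℝ D (ℝ × D) V).flip
    (ContinuousLinearMap.inr ℝ ℝ D)).hasTemperateGrowth).comp (htg_fderiv hg)

lemma par_bound {D V : Type} [NormedAddCommGroup D] [NormedSpace ℝ D]
    [NormedAddCommGroup V] [NormedSpace ℝ V] {g : ℝ × D → V} (hg : g.HasTemperateGrowth) :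
    ∃ (k : ℕ) (C : ℝ), 0 ≤ C ∧ ∀ s ∈ Set.Icc (0:ℝ) 1, ∀ p, ‖g (s, p)‖ ≤ C * (1 + ‖p‖) ^ k := by
  obtain ⟨k, C, hC, h⟩ := hg.norm_iteratedFDeriv_le_uniform 0
  refine ⟨k, C * 2 ^ k, by positivity, fun s hs p => ?_⟩
  have h1 := h 0 le_rfl (s, p)
  rw [norm_iteratedFDeriv_zero] at h1
  refine h1.trans ?_
  rw [mul_assoc, ← mul_pow]
  gcongr
  have : ‖((s, p) : ℝ × D)‖ ≤ 1 + ‖p‖ := by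
    rw [Prod.norm_def]
    refine max_le ?_ (by simp)
    rw [Real.norm_of_nonneg hs.1]
    linarith [hs.2, norm_nonneg p]
  linarith [norm_nonneg p]

lemma parInt_hasFDerivAt {D V : Type} [NormedAddCommGroup D] [NormedSpace ℝ D]
    [NormedAddCommGroup V] [NormedSpace ℝ V] {g : ℝ × D → V} (hg : g.HasTemperateGrowth) (p : D) :
    HasFDerivAt (parInt g) (parInt (parD g) p) p := by
  obtain ⟨k, C, hC, h⟩ := par_bound (parD_htg hg)
  have hc : Continuous g := hg.1.continuous
  have hc' : Continuous (parD g) := (parD_htg hg).1.continuous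
  refine intervalIntegral.hasFDerivAt_integral_of_dominated_of_fderiv_le
    (F := fun p s => g (s, p)) (F' := fun p s => parD g (s, p))
    (bound := fun _ => C * (1 + (‖p‖ + 1)) ^ k) (Metric.ball_mem_nhds p one_pos)
    (Filter.Eventually.of_forall fun x =>
      (by fun_prop : Continuous fun s : ℝ => g (s, x)).aestronglyMeasurable)
    ((by fun_prop : Continuous fun s : ℝ => g (s, p)).intervalIntegrable 0 1)
    ((by fun_prop : Continuous fun s : ℝ => parD g (s, p)).aestronglyMeasurable)
    (Filter.Eventually.of_forall fun s hs x hx => ?_)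
    (continuous_const.intervalIntegrable 0 1)
    (Filter.Eventually.of_forall fun s hs x hx => ?_)
  · rw [Set.uIoc_of_le zero_le_one] at hs
    refine (h s ⟨hs.1.le, hs.2⟩ x).trans ?_
    have : ‖x‖ ≤ ‖p‖ + 1 := by
      have := norm_le_norm_add_norm_sub' x p
      rw [mem_ball_iff_norm] at hx
      linarith
    gcongr
  · have h1 : HasFDerivAt g (fderiv ℝ g (s, x)) (s, x) :=
      (hg.1.differentiable (by simp) _).hasFDerivAt
    exact h1.comp x (hasFDerivAt_prodMk_right s x)

lemma parInt_htg_aux {D : Type} [NormedAddCommGroup D] [NormedSpace ℝ D] (n : ℕ) :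
    ∀ {V : Type} [NormedAddCommGroup V] [NormedSpace ℝ V] {g : ℝ × D → V},
      g.HasTemperateGrowth → ContDiff ℝ n (parInt g) ∧
        ∃ (k : ℕ) (C : ℝ), ∀ x, ‖iteratedFDeriv ℝ n (parInt g) x‖ ≤ C * (1 + ‖x‖) ^ k := by
  induction n with
  | zero =>
    intro V _ _ g hg
    have hd : Differentiable ℝ (parInt g) := fun p => (parInt_hasFDerivAt hg p).differentiableAt
    refine ⟨contDiff_zero.2 hd.continuous, ?_⟩
    obtain ⟨k, C, hC, h⟩ := par_bound hg
    refine ⟨k, C, fun x => ?_⟩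
    rw [norm_iteratedFDeriv_zero]
    have := intervalIntegral.norm_integral_le_of_norm_le_const (a := (0:ℝ)) (b := 1)
      (f := fun s => g (s, x)) (C := C * (1 + ‖x‖) ^ k) (fun s hs => by
        rw [Set.uIoc_of_le zero_le_one] at hs
        exact h s ⟨hs.1.le, hs.2⟩ x)
    simpa [parInt] using this
  | succ n ih =>
    intro V _ _ g hg
    have hd : Differentiable ℝ (parInt g) := fun p => (parInt_hasFDerivAt hg p).differentiableAt
    have he : fderiv ℝ (parInt g) = parInt (parD g) :=
      funext fun p => (parInt_hasFDerivAt hg p).fderiv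
    obtain ⟨h1, k, C, h2⟩ := ih (parD_htg hg)
    refine ⟨?_, k, C, fun x => ?_⟩
    · push_cast
      exact contDiff_succ_iff_fderiv.2 ⟨hd, by simp, by rw [he]; exact h1⟩
    · rw [← norm_iteratedFDeriv_fderiv, he]
      exact h2 x

lemma parInt_htg {D V : Type} [NormedAddCommGroup D] [NormedSpace ℝ D]
    [NormedAddCommGroup V] [NormedSpace ℝ V] {g : ℝ × D → V} (hg : g.HasTemperateGrowth) :
    (parInt g).HasTemperateGrowth :=
  ⟨contDiff_infty.2 fun n => (parInt_htg_aux n hg).1, fun n => (parInt_htg_aux n hg).2⟩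

lemma exp_htg {D : Type*} [NormedAddCommGroup D] [NormedSpace ℝ D] {g : D → ℝ}
    (hg : g.HasTemperateGrowth) :
    (fun x => Complex.exp (-Complex.I * ((g x : ℝ) : ℂ))).HasTemperateGrowth := by
  have key : (fun t : ℝ => Complex.exp (-Complex.I * (t : ℂ))).HasTemperateGrowth := by
    refine ⟨(contDiff_const.mul Complex.ofRealCLM.contDiff).cexp, fun n => ⟨0, 1, fun t => ?_⟩⟩
    have h : ∀ n : ℕ, iteratedDeriv n (fun t : ℝ => Complex.exp (-Complex.I * (t : ℂ))) =
        fun t : ℝ => (-Complex.I) ^ n * Complex.exp (-Complex.I * (t : ℂ)) := by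
      intro n
      induction n with
      | zero => simp
      | succ n ih =>
        rw [iteratedDeriv_succ, ih]
        ext t
        have h1 : HasDerivAt (fun t : ℝ => -Complex.I * (t : ℂ)) (-Complex.I) t := by
          simpa using (Complex.ofRealCLM.hasDerivAt (x := t)).const_mul (-Complex.I)
        have := (h1.cexp.const_mul ((-Complex.I) ^ n)).deriv
        rw [this]; ring
    rw [norm_iteratedFDeriv_eq_norm_iteratedDeriv, h]
    simp [Complex.norm_exp]
  exact key.comp hg

lemma inner_int_htg {E : Type} [NormedAddCommGroup E] [InnerProductSpace ℝ E]
    {A : E → E} (hA : A.HasTemperateGrowth) :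
    (fun q : E × E => ∫ s in (0:ℝ)..1, @inner ℝ _ _ (A (q.1 + s • (q.2 - q.1))) (q.2 - q.1)).HasTemperateGrowth := by
  have h1 : (fun q : ℝ × (E × E) => q.1).HasTemperateGrowth :=
    (ContinuousLinearMap.fst ℝ ℝ (E × E)).hasTemperateGrowth
  have h2 : (fun q : ℝ × (E × E) => q.2.1).HasTemperateGrowth :=
    ((ContinuousLinearMap.fst ℝ E E).comp (ContinuousLinearMap.snd ℝ ℝ (E × E))).hasTemperateGrowth
  have h3 : (fun q : ℝ × (E × E) => q.2.2 - q.2.1).HasTemperateGrowth :=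
    (((ContinuousLinearMap.snd ℝ E E) - (ContinuousLinearMap.fst ℝ E E)).comp
      (ContinuousLinearMap.snd ℝ ℝ (E × E))).hasTemperateGrowth
  have h4 : (fun q : ℝ × (E × E) => A (q.2.1 + q.1 • (q.2.2 - q.2.1))).HasTemperateGrowth :=
    hA.comp (h2.add (h1.smul h3))
  have h5 : (fun q : ℝ × (E × E) =>
      @inner ℝ _ _ (A (q.2.1 + q.1 • (q.2.2 - q.2.1))) (q.2.2 - q.2.1)).HasTemperateGrowth :=
    ContinuousLinearMap.bilinear_hasTemperateGrowth (innerSL ℝ) h4 h3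
  exact parInt_htg h5


section PF
variable {E F V : Type*} [NormedAddCommGroup E] [NormedSpace ℝ E]
  [NormedAddCommGroup F] [InnerProductSpace ℝ F] [FiniteDimensional ℝ F]
  [MeasurableSpace F] [BorelSpace F]
  [NormedAddCommGroup V] [NormedSpace ℂ V]

/-- partial Fourier transform -/
def pF (K : E × F → V) (p : E × F) : V := 𝓕 (fun y => K (p.1, y)) p.2

lemma slice_bound (K : 𝓢(E × F, V)) (x : E) (y : F) (k j n : ℕ) :
    ‖x‖ ^ k * (‖y‖ ^ j * ‖iteratedFDeriv ℝ n (fun y => K (x, y)) y‖) ≤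
      SchwartzMap.seminorm ℝ (k + j) n K := by
  have h1 : (fun y => K (x, y)) =
      (fun q => K ((x, (0:F)) + q)) ∘ (ContinuousLinearMap.inr ℝ E F) := by
    ext y; simp
  have h2 : ‖iteratedFDeriv ℝ n (fun y => K (x, y)) y‖ ≤ ‖iteratedFDeriv ℝ n K (x, y)‖ := by
    have hs : ContDiff ℝ n (fun q => K ((x, (0:F)) + q)) :=
      (K.smooth n).comp (contDiff_const.add contDiff_id)
    rw [h1, ContinuousLinearMap.iteratedFDeriv_comp_right _ hs _ le_rfl, iteratedFDeriv_comp_add_left]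
    refine (ContinuousMultilinearMap.norm_compContinuousLinearMap_le _ _).trans ?_
    have h3 : ‖ContinuousLinearMap.inr ℝ E F‖ ≤ 1 := ContinuousLinearMap.norm_inr_le_one ℝ E F
    have h4 : ∏ _i : Fin n, ‖ContinuousLinearMap.inr ℝ E F‖ ≤ 1 :=
      Finset.prod_le_one (fun _ _ => ContinuousLinearMap.opNorm_nonneg _) (fun _ _ => h3)
    simpa using mul_le_of_le_one_right (norm_nonneg _) h4
  refine le_trans ?_ (K.le_seminorm ℝ (k + j) n (x, y))
  rw [← mul_assoc, pow_add]
  have hx : ‖x‖ ≤ ‖((x, y) : E × F)‖ := by simp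
  have hy : ‖y‖ ≤ ‖((x, y) : E × F)‖ := by simp
  gcongr

/-- slice at fixed `x` -/
def slice (K : 𝓢(E × F, V)) (x : E) : 𝓢(F, V) where
  toFun y := K (x, y)
  smooth' := (K.smooth ⊤).comp (contDiff_const.prodMk contDiff_id)
  decay' j n := ⟨SchwartzMap.seminorm ℝ (0 + j) n K, fun y => by
    simpa using slice_bound K x y 0 j n⟩

lemma slice_apply (K : 𝓢(E × F, V)) (x : E) (y : F) : slice K x y = K (x, y) := rfl

lemma slice_seminorm (K : 𝓢(E × F, V)) (x : E) (k j n : ℕ) :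
    SchwartzMap.seminorm ℝ j n ((‖x‖ ^ k : ℝ) • slice K x) ≤ SchwartzMap.seminorm ℝ (k + j) n K := by
  refine SchwartzMap.seminorm_le_bound ℝ j n _ (apply_nonneg _ _) fun y => ?_
  have : iteratedFDeriv ℝ n ((‖x‖ ^ k : ℝ) • slice K x : 𝓢(F, V)) y =
      (‖x‖ ^ k : ℝ) • iteratedFDeriv ℝ n (slice K x) y := by
    exact iteratedFDeriv_const_smul_apply ((slice K x).smooth n).contDiffAt
  rw [this, norm_smul]
  refine le_trans (le_of_eq ?_) (slice_bound K x y k j n)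
  rw [norm_pow, norm_norm]
  change _ = ‖x‖ ^ k * (‖y‖ ^ j * ‖iteratedFDeriv ℝ n (slice K x) y‖)
  ring

lemma pF_eq (K : 𝓢(E × F, V)) (p : E × F) : pF K p = (𝓕 (slice K p.1) : 𝓢(F, V)) p.2 := rfl

lemma fourier_bound (k : ℕ) : ∃ (s : Finset (ℕ × ℕ)) (C : ℝ), 0 ≤ C ∧ ∀ (f : 𝓢(F, V)) (y : F),
    ‖y‖ ^ k * ‖(𝓕 f : 𝓢(F, V)) y‖ ≤ C * s.sup (schwartzSeminormFamily ℝ F V) f := by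
  let q : Seminorm ℝ 𝓢(F, V) :=
    (SchwartzMap.seminorm ℝ k 0).comp (SchwartzMap.fourierTransformCLM ℝ : 𝓢(F, V) →L[ℝ] 𝓢(F, V)).toLinearMap
  have hq : Continuous q :=
    ((schwartz_withSeminorms ℝ F V).continuous_seminorm (k, 0)).comp
      (SchwartzMap.fourierTransformCLM ℝ : 𝓢(F, V) →L[ℝ] 𝓢(F, V)).continuous
  obtain ⟨s, C, _, h⟩ := Seminorm.bound_of_continuous (schwartz_withSeminorms ℝ F V) q hq
  refine ⟨s, C, C.2, fun f y => ?_⟩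
  refine le_trans ?_ (h f)
  exact SchwartzMap.norm_pow_mul_le_seminorm ℝ (𝓕 f : 𝓢(F, V)) k y

lemma pF_bound_zero (k : ℕ) : ∃ (s : Finset (ℕ × ℕ)) (C : ℝ), 0 ≤ C ∧
    ∀ (K : 𝓢(E × F, V)) (p : E × F),
    ‖p‖ ^ k * ‖pF K p‖ ≤ C * s.sup (schwartzSeminormFamily ℝ (E × F) V) K := by
  obtain ⟨s₁, C₁, hC₁, h₁⟩ := fourier_bound (F := F) (V := V) 0
  obtain ⟨s₂, C₂, hC₂, h₂⟩ := fourier_bound (F := F) (V := V) k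
  let t₁ := s₁.image (fun m : ℕ × ℕ => (k + m.1, m.2))
  have sup_le : ∀ (s : Finset (ℕ × ℕ)) (l : ℕ) (K : 𝓢(E × F, V)) (x : E),
      s.sup (schwartzSeminormFamily ℝ F V) ((‖x‖ ^ l : ℝ) • slice K x) ≤
      (s.image (fun m : ℕ × ℕ => (l + m.1, m.2))).sup (schwartzSeminormFamily ℝ (E × F) V) K := by
    intro s l K x
    refine Seminorm.finset_sup_apply_le (apply_nonneg _ _) fun m hm => ?_
    refine (slice_seminorm K x l m.1 m.2).trans ?_
    exact Seminorm.le_finset_sup_apply (p := schwartzSeminormFamily ℝ (E × F) V)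
      (i := (l + m.1, m.2)) (Finset.mem_image_of_mem (fun m : ℕ × ℕ => (l + m.1, m.2)) hm)
  refine ⟨s₁.image (fun m : ℕ × ℕ => (k + m.1, m.2)) ∪ s₂.image (fun m : ℕ × ℕ => (0 + m.1, m.2)),
    C₁ + C₂, by positivity, fun K p => ?_⟩
  set P := (s₁.image (fun m : ℕ × ℕ => (k + m.1, m.2)) ∪
    s₂.image (fun m : ℕ × ℕ => (0 + m.1, m.2))).sup (schwartzSeminormFamily ℝ (E × F) V) K with hP
  have a1 : ‖p.1‖ ^ k * ‖pF K p‖ ≤ C₁ * P := by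
    have := h₁ ((‖p.1‖ ^ k : ℝ) • slice K p.1) p.2
    rw [map_smul_eq_mul] at this
    have h' : ‖p.1‖ ^ k * s₁.sup (schwartzSeminormFamily ℝ F V) (slice K p.1) ≤ P := by
      have h3 := sup_le s₁ k K p.1
      rw [map_smul_eq_mul, norm_pow, norm_norm] at h3
      refine h3.trans ?_
      exact Finset.sup_mono (f := schwartzSeminormFamily ℝ (E × F) V) Finset.subset_union_left K
    have h'' := h₁ (slice K p.1) p.2
    rw [← pF_eq, pow_zero, one_mul] at h''
    calc _ ≤ ‖p.1‖ ^ k * (C₁ * s₁.sup (schwartzSeminormFamily ℝ F V) (slice K p.1)) := by gcongr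
      _ = C₁ * (‖p.1‖ ^ k * s₁.sup (schwartzSeminormFamily ℝ F V) (slice K p.1)) := by ring
      _ ≤ _ := by gcongr
  have a2 : ‖p.2‖ ^ k * ‖pF K p‖ ≤ C₂ * P := by
    have h' : s₂.sup (schwartzSeminormFamily ℝ F V) (slice K p.1) ≤ P := by
      have h3 := sup_le s₂ 0 K p.1
      rw [pow_zero, one_smul] at h3
      refine h3.trans ?_
      exact Finset.sup_mono (f := schwartzSeminormFamily ℝ (E × F) V) Finset.subset_union_right K
    have h'' := h₂ (slice K p.1) p.2
    rw [← pF_eq] at h''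
    exact h''.trans (by gcongr)
  have hp : ‖p‖ ^ k ≤ ‖p.1‖ ^ k + ‖p.2‖ ^ k := by
    rw [Prod.norm_def]
    rcases max_choice ‖p.1‖ ‖p.2‖ with h | h <;> rw [h] <;> simp
  calc _ ≤ (‖p.1‖ ^ k + ‖p.2‖ ^ k) * ‖pF K p‖ := by gcongr
    _ ≤ _ := by linarith

/-- the bilinear form `(y, (x, ξ)) ↦ ⟨y, ξ⟩` -/
def Lsnd (E F : Type*) [NormedAddCommGroup E] [NormedSpace ℝ E]
    [NormedAddCommGroup F] [InnerProductSpace ℝ F] : F →L[ℝ] (E × F) →L[ℝ] ℝ :=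
  (innerSL ℝ : F →L[ℝ] F →L[ℝ] ℝ).bilinearComp (ContinuousLinearMap.id ℝ F)
    (ContinuousLinearMap.snd ℝ E F)

/-- the Schwartz function whose partial Fourier transform is the derivative -/
def pD : 𝓢(E × F, V) →L[ℝ] 𝓢(E × F, (E × F) →L[ℝ] V) :=
  (SchwartzMap.postcompCLM ((ContinuousLinearMap.compL ℝ (E × F) (E × F) V).flip
    ((ContinuousLinearMap.inl ℝ E F).comp (ContinuousLinearMap.fst ℝ E F)))).comp
      (SchwartzMap.fderivCLM ℝ (E × F) V) +
  (SchwartzMap.smulRightCLM ℝ V ((Lsnd E F).comp (ContinuousLinearMap.snd ℝ E F))).comp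
    (SchwartzMap.postcompCLM (((-2 * π * Complex.I : ℂ) • ContinuousLinearMap.id ℂ V).restrictScalars ℝ))

lemma pD_apply (K : 𝓢(E × F, V)) (q : E × F) :
    pD K q = (fderiv ℝ K q).comp ((ContinuousLinearMap.inl ℝ E F).comp (ContinuousLinearMap.fst ℝ E F))
      + (Lsnd E F q.2).smulRight ((-2 * π * Complex.I : ℂ) • K q) := rfl

lemma pF_integrand_hasFDerivAt (K : 𝓢(E × F, V)) (p : E × F) (y : F) :
    HasFDerivAt (fun p : E × F => (𝐞 (-(@inner ℝ _ _ y p.2)) : ℂ) • K (p.1, y))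
      ((𝐞 (-(@inner ℝ _ _ y p.2)) : ℂ) • pD K (p.1, y)) p := by
  have h1 := Real.hasFDerivAt_fourierChar_neg_bilinear_right (Lsnd E F) y p
  have h2 : HasFDerivAt (fun p : E × F => K (p.1, y))
      ((fderiv ℝ K (p.1, y)).comp ((ContinuousLinearMap.inl ℝ E F).comp
        (ContinuousLinearMap.fst ℝ E F))) p := by
    have h0 : HasFDerivAt (fun e : E => (e, y)) (ContinuousLinearMap.inl ℝ E F) p.1 :=
      hasFDerivAt_prodMk_left p.1 y
    have h00 : HasFDerivAt (fun p : E × F => (p.1, y))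
        ((ContinuousLinearMap.inl ℝ E F).comp (ContinuousLinearMap.fst ℝ E F)) p :=
      h0.comp p (hasFDerivAt_fst (p := p))
    exact (K.hasFDerivAt (p.1, y)).comp p h00
  have h3 := h1.smul h2
  refine h3.congr_fderiv ?_
  ext v
  · simp [pD_apply, Lsnd]
  · simp only [pD_apply, Lsnd]
    simp
    rw [← Complex.coe_smul, smul_smul, smul_smul]
    ring_nf

lemma pF_integrand_aesm {K : E × F → V} (hcK : Continuous K) (p : E × F) :
    AEStronglyMeasurable (fun y : F => (𝐞 (-(@inner ℝ _ _ y p.2)) : ℂ) • K (p.1, y)) volume := by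
  have := Real.continuous_fourierChar
  exact (by fun_prop : Continuous fun y : F =>
      (𝐞 (-(@inner ℝ _ _ y p.2)) : ℂ) • K (p.1, y)).aestronglyMeasurable

lemma pF_hasFDerivAt (K : 𝓢(E × F, V)) (p : E × F) :
    HasFDerivAt (pF K) (pF (pD K) p) p := by
  have e1 : pF K = fun p : E × F => ∫ y, (𝐞 (-(@inner ℝ _ _ y p.2)) : ℂ) • K (p.1, y) := by
    ext p; exact Real.fourier_eq _ _
  have e2 : pF (pD K) p = ∫ y, (𝐞 (-(@inner ℝ _ _ y p.2)) : ℂ) • pD K (p.1, y) := by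
    exact Real.fourier_eq _ _
  rw [e1, e2]
  set l := (volume : Measure F).integrablePower
  refine hasFDerivAt_integral_of_dominated_of_fderiv_le (s := Set.univ)
    (bound := fun y : F => 2 ^ l * (SchwartzMap.seminorm ℝ 0 0 (pD K) +
      SchwartzMap.seminorm ℝ l 0 (pD K)) * (1 + ‖y‖) ^ (-(l : ℝ)))
    Filter.univ_mem (Filter.Eventually.of_forall fun x => ?_) ?_ ?_
    (Filter.Eventually.of_forall fun y x _ => ?_) ?_
    (Filter.Eventually.of_forall fun y x _ => pF_integrand_hasFDerivAt K x y)
  · exact pF_integrand_aesm K.continuous x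
  · exact (Real.fourierIntegral_convergent_iff (μ := volume) p.2).2 (slice K p.1).integrable
  · exact pF_integrand_aesm (pD K).continuous p
  · rw [norm_smul, Circle.norm_coe, one_mul]
    have hy : ‖y‖ ≤ ‖((x.1, y) : E × F)‖ := by simp
    have h1 : ‖pD K (x.1, y)‖ ≤ SchwartzMap.seminorm ℝ 0 0 (pD K) :=
      SchwartzMap.norm_le_seminorm ℝ _ _
    have h2 : ‖y‖ ^ (0 + l) * ‖pD K (x.1, y)‖ ≤ SchwartzMap.seminorm ℝ l 0 (pD K) := by
      refine le_trans ?_ (SchwartzMap.norm_pow_mul_le_seminorm ℝ (pD K) l (x.1, y))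
      rw [zero_add]
      gcongr
    simpa using pow_mul_le_of_le_of_pow_mul_le (norm_nonneg y) (norm_nonneg (pD K (x.1, y))) h1 h2
  · exact (Measure.integrable_pow_neg_integrablePower (volume : Measure F)).const_mul _


end PF

lemma sup_cont {ι X Y : Type*} [AddCommGroup X] [Module ℝ X] [TopologicalSpace X]
    [TopologicalSpace Y]
    (P : ι → Seminorm ℝ X) (hP : ∀ i, Continuous (P i)) (s : Finset ι) (T : Y → X)
    (hT : Continuous T) : Continuous fun y => (s.sup P) (T y) := by
  classical
  refine Continuous.comp (g := fun x => (s.sup P) x) ?_ hT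
  induction s using Finset.induction_on with
  | empty =>
    rw [Finset.sup_empty]
    exact continuous_const
  | insert i s hi ih =>
    rw [Finset.sup_insert]
    exact (hP i).sup ih

section PF2
variable {E F : Type} [NormedAddCommGroup E] [NormedSpace ℝ E]
  [NormedAddCommGroup F] [InnerProductSpace ℝ F] [FiniteDimensional ℝ F]
  [MeasurableSpace F] [BorelSpace F]

lemma pF_aux (n : ℕ) : ∀ {V : Type*} [NormedAddCommGroup V] [NormedSpace ℂ V],
    (∀ K : 𝓢(E × F, V), ContDiff ℝ n (pF K)) ∧ 
    ∀ k : ℕ, ∃ (s : Finset (ℕ × ℕ)) (C : ℝ), 0 ≤ C ∧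
    ∀ (K : 𝓢(E × F, V)) (p : E × F), ‖p‖ ^ k * ‖iteratedFDeriv ℝ n (pF K) p‖ ≤
      C * s.sup (schwartzSeminormFamily ℝ (E × F) V) K := by
  induction n with
  | zero =>
    intro V _ _
    refine ⟨fun K => contDiff_zero.2 (Differentiable.continuous (𝕜 := ℝ)
      fun p => (pF_hasFDerivAt K p).differentiableAt), fun k => ?_⟩
    obtain ⟨s, C, hC, h⟩ := pF_bound_zero (E := E) (F := F) (V := V) k
    exact ⟨s, C, hC, fun K p => by rw [norm_iteratedFDeriv_zero]; exact h K p⟩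
  | succ n ih =>
    intro V _ _
    have he : ∀ K : 𝓢(E × F, V), fderiv ℝ (pF K) = pF (pD K) := fun K => 
      funext fun p => (pF_hasFDerivAt K p).fderiv
    obtain ⟨h1, h2⟩ := ih (V := (E × F) →L[ℝ] V)
    refine ⟨fun K => ?_, fun k => ?_⟩
    · push_cast
      exact contDiff_succ_iff_fderiv.2 ⟨fun p => (pF_hasFDerivAt K p).differentiableAt, by simp,
        by rw [he]; exact h1 _⟩
    · obtain ⟨s, C, hC, h⟩ := h2 k
      let q : Seminorm ℝ 𝓢(E × F, V) :=
        (s.sup (schwartzSeminormFamily ℝ (E × F) ((E × F) →L[ℝ] V))).comp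
          (pD : 𝓢(E × F, V) →L[ℝ] 𝓢(E × F, (E × F) →L[ℝ] V)).toLinearMap
      have hq : Continuous q := by
        exact sup_cont _ (fun i => ((schwartz_withSeminorms ℝ (E × F) ((E × F) →L[ℝ] V)).continuous_seminorm i)) s pD pD.continuous
      obtain ⟨t, D, _, hD⟩ := Seminorm.bound_of_continuous (schwartz_withSeminorms ℝ (E × F) V) q hq
      refine ⟨t, C * D, mul_nonneg hC D.2, fun K p => ?_⟩
      rw [← norm_iteratedFDeriv_fderiv, he]
      refine (h (pD K) p).trans ?_
      rw [mul_assoc]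
      exact mul_le_mul_of_nonneg_left (hD K) hC

variable {V : Type*} [NormedAddCommGroup V] [NormedSpace ℂ V]

lemma pF_add (K K' : 𝓢(E × F, V)) (p : E × F) : pF (K + K' : 𝓢(E × F, V)) p = pF K p + pF K' p := by
  have : slice (K + K') p.1 = slice K p.1 + slice K' p.1 := rfl
  rw [pF_eq, pF_eq, pF_eq, this, FourierTransform.fourier_add]; rfl

lemma pF_smul (c : ℂ) (K : 𝓢(E × F, V)) (p : E × F) : pF (c • K : 𝓢(E × F, V)) p = c • pF K p := by
  have : slice (c • K) p.1 = c • slice K p.1 := rfl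
  rw [pF_eq, pF_eq, this, FourierTransform.fourier_smul]; rfl

/-- real partial Fourier transform on Schwartz space -/
def pFCLMR : 𝓢(E × F, V) →L[ℝ] 𝓢(E × F, V) :=
  SchwartzMap.mkCLM (𝕜 := ℝ) (fun K => pF K) pF_add
    (fun c K p => by
      have := pF_smul (c : ℂ) K p
      have h : ((c : ℂ) • K : 𝓢(E × F, V)) = c • K := by ext q; simp
      rw [h] at this
      simpa using this)
    (fun K => contDiff_infty.2 fun n => (pF_aux n).1 K)
    (fun n => (pF_aux n.2).2 n.1)

/-- complex partial Fourier transform on Schwartz space -/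
def pFCLM : 𝓢(E × F, V) →L[ℂ] 𝓢(E × F, V) where
  toFun K := pFCLMR K
  map_add' K K' := map_add _ _ _
  map_smul' c K := SchwartzMap.ext fun p => pF_smul c K p
  cont := (pFCLMR (E := E) (F := F) (V := V)).continuous

lemma pFCLM_apply (K : 𝓢(E × F, V)) (p : E × F) : pFCLM K p = pF K p := rfl

/-- reflection in the second variable -/
def refl2 (E F : Type) [NormedAddCommGroup E] [NormedSpace ℝ E]
    [NormedAddCommGroup F] [NormedSpace ℝ F] : (E × F) ≃L[ℝ] (E × F) :=
  (ContinuousLinearEquiv.refl ℝ E).prodCongr (ContinuousLinearEquiv.neg ℝ)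

/-- inverse partial Fourier transform -/
def pFinv : 𝓢(E × F, V) →L[ℂ] 𝓢(E × F, V) :=
  (SchwartzMap.compCLMOfContinuousLinearEquiv ℂ (refl2 E F)).comp pFCLM

lemma pFinv_apply (K : 𝓢(E × F, V)) (p : E × F) : pFinv K p = pF K (p.1, -p.2) := rfl

lemma pFinv_eq (K : 𝓢(E × F, V)) (p : E × F) :
    pFinv K p = (𝓕⁻ (slice K p.1) : 𝓢(F, V)) p.2 := by
  rw [pFinv_apply, SchwartzMap.fourierInv_coe, Real.fourierInv_eq_fourier_neg]; rfl

lemma pFinv_pF [CompleteSpace V] (K : 𝓢(E × F, V)) : pFinv (pFCLM K) = K := by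
  ext p
  rw [pFinv_eq]
  have : slice (pFCLM K) p.1 = 𝓕 (slice K p.1) := rfl
  rw [this, FourierTransform.fourierInv_fourier_eq]; rfl

lemma pF_pFinv [CompleteSpace V] (K : 𝓢(E × F, V)) : pFCLM (pFinv K) = K := by
  ext p
  rw [pFCLM_apply, pF_eq]
  have : slice (pFinv K) p.1 = 𝓕⁻ (slice K p.1) := by
    ext y
    exact pFinv_eq K (p.1, y)
  rw [this, FourierTransform.fourier_fourierInv_eq]; rfl

end PF2


section Main
variable {d : ℕ}

lemma IsPolyVF.htg {A : Ed d → Ed d} (hA : IsPolyVF A) : A.HasTemperateGrowth := by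
  refine ⟨hA.1, fun n => ?_⟩
  obtain ⟨C, k, h⟩ := hA.2 n
  exact ⟨k, C, h⟩

lemma lineInt_symm (A : Ed d → Ed d) (x y : Ed d) : lineInt A y x = - lineInt A x y := by
  unfold lineInt
  have h := intervalIntegral.integral_comp_sub_left (a := 0) (b := 1)
    (fun s : ℝ => @inner ℝ _ _ (A (y + s • (x - y))) (x - y)) 1
  simp only [sub_self, sub_zero] at h
  rw [← h, ← intervalIntegral.integral_neg]
  refine intervalIntegral.integral_congr fun s _ => ?_
  have e1 : y + (1 - s) • (x - y) = x + s • (y - x) := by module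
  have e2 : x - y = -(y - x) := by abel
  simp only [e1]
  rw [e2, inner_neg_right]

/-- The linear change of variables `(x, y) ↦ (x/ε + y/2, x/ε - y/2)`. -/
def eqL (d : ℕ) (ε : ℝ) (hε : ε ≠ 0) : (Ed d × Ed d) ≃L[ℝ] (Ed d × Ed d) :=
  ContinuousLinearEquiv.equivOfInverse
    ((ε⁻¹ • ContinuousLinearMap.fst ℝ (Ed d) (Ed d) +
        (2:ℝ)⁻¹ • ContinuousLinearMap.snd ℝ (Ed d) (Ed d)).prod
      (ε⁻¹ • ContinuousLinearMap.fst ℝ (Ed d) (Ed d) -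
        (2:ℝ)⁻¹ • ContinuousLinearMap.snd ℝ (Ed d) (Ed d)))
    (((ε / 2) • (ContinuousLinearMap.fst ℝ (Ed d) (Ed d) +
        ContinuousLinearMap.snd ℝ (Ed d) (Ed d))).prod
      (ContinuousLinearMap.fst ℝ (Ed d) (Ed d) - ContinuousLinearMap.snd ℝ (Ed d) (Ed d)))
    (fun p => by
      refine Prod.ext ?_ ?_
      · change (ε / 2) • ((ε⁻¹ • p.1 + (2:ℝ)⁻¹ • p.2) + (ε⁻¹ • p.1 - (2:ℝ)⁻¹ • p.2)) = p.1
        have : (ε / 2) • ((ε⁻¹ • p.1 + (2:ℝ)⁻¹ • p.2) + (ε⁻¹ • p.1 - (2:ℝ)⁻¹ • p.2)) =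
          (ε * ε⁻¹) • p.1 := by module
        rw [this, mul_inv_cancel₀ hε, one_smul]
      · change (ε⁻¹ • p.1 + (2:ℝ)⁻¹ • p.2) - (ε⁻¹ • p.1 - (2:ℝ)⁻¹ • p.2) = p.2
        module)
    (fun q => by
      have h : ε⁻¹ * (ε / 2) = 2⁻¹ := by field_simp
      refine Prod.ext ?_ ?_
      · change ε⁻¹ • ((ε / 2) • (q.1 + q.2)) + (2:ℝ)⁻¹ • (q.1 - q.2) = q.1
        rw [smul_smul, h]; module
      · change ε⁻¹ • ((ε / 2) • (q.1 + q.2)) - (2:ℝ)⁻¹ • (q.1 - q.2) = q.2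
        rw [smul_smul, h]; module)

lemma eqL_apply (ε : ℝ) (hε : ε ≠ 0) (p : Ed d × Ed d) :
    eqL d ε hε p = (ε⁻¹ • p.1 + (2:ℝ)⁻¹ • p.2, ε⁻¹ • p.1 - (2:ℝ)⁻¹ • p.2) := rfl

lemma eqL_symm_apply (ε : ℝ) (hε : ε ≠ 0) (q : Ed d × Ed d) :
    (eqL d ε hε).symm q = ((ε / 2) • (q.1 + q.2), q.1 - q.2) := rfl

/-- The scaling `(x, ξ) ↦ (x, ξ/(2π))`. -/
def eqS (d : ℕ) : (Ed d × Ed d) ≃L[ℝ] (Ed d × Ed d) :=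
  ContinuousLinearEquiv.equivOfInverse
    ((ContinuousLinearMap.fst ℝ (Ed d) (Ed d)).prod
      ((2 * Real.pi)⁻¹ • ContinuousLinearMap.snd ℝ (Ed d) (Ed d)))
    ((ContinuousLinearMap.fst ℝ (Ed d) (Ed d)).prod
      ((2 * Real.pi) • ContinuousLinearMap.snd ℝ (Ed d) (Ed d)))
    (fun p => Prod.ext rfl (smul_inv_smul₀ Real.two_pi_pos.ne' p.2))
    (fun p => Prod.ext rfl (inv_smul_smul₀ Real.two_pi_pos.ne' p.2))

lemma eqS_apply (p : Ed d × Ed d) : eqS d p = (p.1, (2 * Real.pi)⁻¹ • p.2) := rfl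

lemma eqS_symm_apply (p : Ed d × Ed d) : (eqS d).symm p = (p.1, (2 * Real.pi) • p.2) := rfl

/-- The real phase. -/
def rph (c ε : ℝ) (A : Ed d → Ed d) (p : Ed d × Ed d) : ℝ :=
  c * lineInt A (p.1 - (ε / 2) • p.2) (p.1 + (ε / 2) • p.2)

lemma rph_htg (c ε : ℝ) {A : Ed d → Ed d} (hA : IsPolyVF A) :
    (rph c ε A).HasTemperateGrowth := by
  have h := inner_int_htg hA.htg
  let T : (Ed d × Ed d) →L[ℝ] (Ed d × Ed d) :=
    (ContinuousLinearMap.fst ℝ (Ed d) (Ed d) -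
        (ε / 2) • ContinuousLinearMap.snd ℝ (Ed d) (Ed d)).prod
      (ContinuousLinearMap.fst ℝ (Ed d) (Ed d) +
        (ε / 2) • ContinuousLinearMap.snd ℝ (Ed d) (Ed d))
  have h2 := h.comp T.hasTemperateGrowth
  exact (Function.HasTemperateGrowth.const c).mul h2

/-- The complex phase. -/
def cph (c ε : ℝ) (A : Ed d → Ed d) (p : Ed d × Ed d) : ℂ :=
  Complex.exp (-Complex.I * ((rph c ε A p : ℝ) : ℂ))

lemma cph_htg (c ε : ℝ) {A : Ed d → Ed d} (hA : IsPolyVF A) :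
    (cph c ε A).HasTemperateGrowth := exp_htg (rph_htg c ε hA)

lemma cph_mul (c ε : ℝ) (A : Ed d → Ed d) (p : Ed d × Ed d) :
    cph c ε A p * cph (-c) ε A p = 1 := by
  unfold cph rph
  rw [← Complex.exp_add]
  convert Complex.exp_zero using 2
  push_cast; ring

variable {V : Type*} [NormedAddCommGroup V] [NormedSpace ℂ V] 

/-- Forward map. -/
def fwd (V : Type*) [NormedAddCommGroup V] [NormedSpace ℂ V] (c ε : ℝ) (hε : ε ≠ 0)
    (A : Ed d → Ed d) :
    𝓢(Ed d × Ed d, V) →L[ℂ] 𝓢(Ed d × Ed d, V) :=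
  (SchwartzMap.compCLMOfContinuousLinearEquiv ℂ (eqS d)).comp
    (pFCLM.comp ((SchwartzMap.smulLeftCLM V (cph c ε A)).comp
      (SchwartzMap.compCLMOfContinuousLinearEquiv ℂ (eqL d ε hε))))

/-- Backward map. -/
def bwd (V : Type*) [NormedAddCommGroup V] [NormedSpace ℂ V] (c ε : ℝ) (hε : ε ≠ 0)
    (A : Ed d → Ed d) :
    𝓢(Ed d × Ed d, V) →L[ℂ] 𝓢(Ed d × Ed d, V) :=
  (SchwartzMap.compCLMOfContinuousLinearEquiv ℂ (eqL d ε hε).symm).comp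
    ((SchwartzMap.smulLeftCLM V (cph (-c) ε A)).comp
      (pFinv.comp (SchwartzMap.compCLMOfContinuousLinearEquiv ℂ (eqS d).symm)))

lemma comp_symm (T : (Ed d × Ed d) ≃L[ℝ] (Ed d × Ed d)) (K : 𝓢(Ed d × Ed d, V)) :
    SchwartzMap.compCLMOfContinuousLinearEquiv ℂ T
      (SchwartzMap.compCLMOfContinuousLinearEquiv ℂ T.symm K) = K := by
  ext p
  change K (T.symm (T p)) = K p
  rw [T.symm_apply_apply]

lemma comp_symm' (T : (Ed d × Ed d) ≃L[ℝ] (Ed d × Ed d)) (K : 𝓢(Ed d × Ed d, V)) :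
    SchwartzMap.compCLMOfContinuousLinearEquiv ℂ T.symm
      (SchwartzMap.compCLMOfContinuousLinearEquiv ℂ T K) = K := by
  ext p
  change K (T (T.symm p)) = K p
  rw [T.apply_symm_apply]

lemma mul_symm (c ε : ℝ) {A : Ed d → Ed d} (hA : IsPolyVF A) (K : 𝓢(Ed d × Ed d, V)) :
    SchwartzMap.smulLeftCLM V (cph c ε A) (SchwartzMap.smulLeftCLM V (cph (-c) ε A) K) = K := by
  ext p
  rw [SchwartzMap.smulLeftCLM_apply_apply (cph_htg c ε hA),
    SchwartzMap.smulLeftCLM_apply_apply (cph_htg (-c) ε hA), smul_smul, cph_mul, one_smul]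

lemma fwd_bwd [CompleteSpace V] (c ε : ℝ) (hε : ε ≠ 0) {A : Ed d → Ed d} (hA : IsPolyVF A)
    (K : 𝓢(Ed d × Ed d, V)) : fwd V c ε hε A (bwd V c ε hε A K) = K := by
  simp only [fwd, bwd, ContinuousLinearMap.comp_apply]
  rw [comp_symm, mul_symm c ε hA, pF_pFinv, comp_symm]

lemma bwd_fwd [CompleteSpace V] (c ε : ℝ) (hε : ε ≠ 0) {A : Ed d → Ed d} (hA : IsPolyVF A)
    (K : 𝓢(Ed d × Ed d, V)) : bwd V c ε hε A (fwd V c ε hε A K) = K := by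
  simp only [fwd, bwd, ContinuousLinearMap.comp_apply]
  have h := mul_symm (-c) ε hA (SchwartzMap.compCLMOfContinuousLinearEquiv ℂ (eqL d ε hε) K)
  rw [neg_neg] at h
  rw [comp_symm', pFinv_pF, h, comp_symm']

lemma fwd_apply (c ε : ℝ) (hε : ε ≠ 0) {A : Ed d → Ed d} (hA : IsPolyVF A)
    (K : 𝓢(Ed d × Ed d, V)) (p : Ed d × Ed d) :
    fwd V c ε hε A K p = ∫ y : Ed d,
      (Complex.exp (-Complex.I * ((@inner ℝ _ _ y p.2 : ℝ) : ℂ)) *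
        Complex.exp (-Complex.I *
          ((c * lineInt A (p.1 - (ε / 2) • y) (p.1 + (ε / 2) • y) : ℝ) : ℂ))) •
        K (ε⁻¹ • p.1 + (2:ℝ)⁻¹ • y, ε⁻¹ • p.1 - (2:ℝ)⁻¹ • y) := by
  change 𝓕 (fun y => SchwartzMap.smulLeftCLM V (cph c ε A)
    (SchwartzMap.compCLMOfContinuousLinearEquiv ℂ (eqL d ε hε) K) (p.1, y))
      ((2 * Real.pi)⁻¹ • p.2) = _
  rw [Real.fourier_eq']
  refine integral_congr_ae (Filter.Eventually.of_forall fun y => ?_)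
  simp only [SchwartzMap.smulLeftCLM_apply_apply (cph_htg c ε hA)]
  rw [smul_smul]
  have e : (-2 * Real.pi * @inner ℝ _ _ y ((2 * Real.pi)⁻¹ • p.2) : ℝ) = - @inner ℝ _ _ y p.2 := by
    rw [inner_smul_right]; field_simp
  rw [e]
  have e2 : (((- @inner ℝ _ _ y p.2 : ℝ) : ℂ) * Complex.I) =
      -Complex.I * ((@inner ℝ _ _ y p.2 : ℝ) : ℂ) := by push_cast; ring
  rw [e2]
  rfl

lemma bwd_apply (c ε : ℝ) (hε : ε ≠ 0) {A : Ed d → Ed d} (hA : IsPolyVF A)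
    (f : 𝓢(Ed d × Ed d, V)) (q : Ed d × Ed d) :
    bwd V c ε hε A f q =
    Complex.exp (-Complex.I * ((c * lineInt A (ε • q.1) (ε • q.2) : ℝ) : ℂ)) •
      ((((2 * Real.pi) ^ d)⁻¹ : ℝ) •
        ∫ η : Ed d,
          Complex.exp (-Complex.I * ((@inner ℝ _ _ (q.2 - q.1) η : ℝ) : ℂ)) •
            f ((ε / 2) • (q.1 + q.2), η)) := by
  change SchwartzMap.smulLeftCLM V (cph (-c) ε A)
    (pFinv (SchwartzMap.compCLMOfContinuousLinearEquiv ℂ (eqS d).symm f))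
      ((ε / 2) • (q.1 + q.2), q.1 - q.2) = _
  rw [SchwartzMap.smulLeftCLM_apply_apply (cph_htg (-c) ε hA)]
  have e1 : cph (-c) ε A ((ε / 2) • (q.1 + q.2), q.1 - q.2) =
      Complex.exp (-Complex.I * ((c * lineInt A (ε • q.1) (ε • q.2) : ℝ) : ℂ)) := by
    unfold cph rph
    have a1 : (ε / 2) • (q.1 + q.2) - (ε / 2) • (q.1 - q.2) = ε • q.2 := by module
    have a2 : (ε / 2) • (q.1 + q.2) + (ε / 2) • (q.1 - q.2) = ε • q.1 := by module
    simp only [a1, a2]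
    rw [lineInt_symm A (ε • q.1) (ε • q.2)]
    congr 3
    ring
  rw [e1]
  congr 1
  change 𝓕 (fun y => f ((ε / 2) • (q.1 + q.2), (2 * Real.pi) • y)) (-(q.1 - q.2)) = _
  rw [Real.fourier_eq']
  have h := Measure.integral_comp_smul (volume : Measure (Ed d)) (fun η : Ed d =>
    Complex.exp (-Complex.I * ((@inner ℝ _ _ (q.2 - q.1) η : ℝ) : ℂ)) •
            f ((ε / 2) • (q.1 + q.2), η)) (2 * Real.pi)
  rw [finrank_euclideanSpace_fin, abs_of_pos (inv_pos.2 (pow_pos Real.two_pi_pos d))] at h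
  rw [← h]
  refine integral_congr_ae (Filter.Eventually.of_forall fun y => ?_)
  simp only
  congr 2
  rw [neg_sub, inner_smul_right, real_inner_comm]
  push_cast; ring

end Main

end Helpers

theorem statement_3 {d : ℕ} (ε lam : ℝ) (hε : 0 < ε) (hlam : 0 < lam)
    {H H' : Type*}
    [NormedAddCommGroup H] [InnerProductSpace ℂ H] [CompleteSpace H]
    [TopologicalSpace.SeparableSpace H]
    [NormedAddCommGroup H'] [InnerProductSpace ℂ H'] [CompleteSpace H']
    [TopologicalSpace.SeparableSpace H']
    (A : Ed d → Ed d) (hA : IsPolyVF A) :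
    ∃ W : SchwartzMap (Ed d × Ed d) (H →L[ℂ] H') ≃L[ℂ]
        SchwartzMap (Ed d × Ed d) (H →L[ℂ] H'),
      (∀ (K : SchwartzMap (Ed d × Ed d) (H →L[ℂ] H')) (p : Ed d × Ed d),
        W K p = wignerT ε lam A (⇑K) p) ∧
      (∀ (f : SchwartzMap (Ed d × Ed d) (H →L[ℂ] H')) (q : Ed d × Ed d),
        W.symm f q = magKernel ε lam A (⇑f) q) := by
  refine ⟨ContinuousLinearEquiv.equivOfInverse
    (fwd (H →L[ℂ] H') (lam / ε) ε hε.ne' A) (bwd (H →L[ℂ] H') (lam / ε) ε hε.ne' A)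
    (bwd_fwd (lam / ε) ε hε.ne' hA) (fwd_bwd (lam / ε) ε hε.ne' hA), ?_, ?_⟩
  · intro K p
    exact fwd_apply (lam / ε) ε hε.ne' hA K p
  · intro f q
    exact bwd_apply (lam / ε) ε hε.ne' hA f q

end
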